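/- Let R = k[X,Y]/(F), and let R₁₂ = R/(z₁z₂R) and R₃₄ = R/(z₃z₄R) (quotients by the images of z₁z₂ = XY and z₃z₄ = (X−Y)(X−λY)). Then the R-module Ext¹_R(R₁₂, R₃₄) is a 4-dimensional k-vector space. -/

import Mathlib

open CategoryTheory

/-!
If `a * r = 0 ↔ b ∣ r` and `b * r = 0 ↔ a ∣ r` in a commutative ring `R`, then
`⋯ → R ─a→ R ─b→ R ─a→ R → R ⧸ (a) → 0` is a free resolution. Hence, for odd `n` and a
module `M` killed by `b`, the group `Extⁿ(R ⧸ (a), M)` is the homology of `M ─a→ M ─b→ M`,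
that is `M ⧸ a M`. For regular elements `p`, `q` of a ring `A` this applies to their classes in
`A ⧸ (p * q)` and gives `Extⁿ(A ⧸ p, A ⧸ q) ≃ A ⧸ (p, q)`.

If `p` and `q` are products of linear forms in two variables, with no form of the first family
proportional to one of the second, then the dimension of `A ⧸ (p, q)` is additive in both products,
and each pair of forms contributes `dim A ⧸ (X, Y) = 1`.
-/

universe u

section Multiplication

variable (k : Type u) {R : Type u} [CommRing k] [CommRing R] [Algebra k R]
  (M : Type u) [AddCommGroup M] [Module k M] [Module R M] [IsScalarTower k R M]

/-- Multiplication by `a : R` on an `R`-module `M`, as a morphism of `k`-modules. -/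
noncomputable abbrev smulEnd (a : R) : ModuleCat.of k M ⟶ ModuleCat.of k M :=
  ModuleCat.ofHom (Algebra.lsmul k k M a)

lemma smulEnd_comp_smulEnd_eq_zero {a b : R} (hab : a * b = 0) :
    smulEnd k M a ≫ smulEnd k M b = 0 := by
  ext m
  simp [smul_smul, mul_comm b a, hab]

open scoped Pointwise in
lemma range_lsmul (a : R) :
    LinearMap.range (Algebra.lsmul k k M a) = (a • (⊤ : Submodule R M)).restrictScalars k := by
  ext m
  simp [Submodule.mem_smul_pointwise_iff_exists]

lemma smulEnd_comp_mkQ (a : R) :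
    smulEnd R R a ≫ ModuleCat.ofHom (Submodule.mkQ (Ideal.span {a})) = 0 := by
  ext
  exact (Submodule.Quotient.mk_eq_zero _).2 (Ideal.mem_span_singleton.2 ⟨1, rfl⟩)

lemma exact_smulEnd_mkQ (a : R) :
    (ShortComplex.mk (smulEnd R R a) (ModuleCat.ofHom (Submodule.mkQ (Ideal.span {a})))
      (smulEnd_comp_mkQ a)).Exact := by
  rw [ShortComplex.moduleCat_exact_iff]
  intro r hr
  obtain ⟨s, rfl⟩ := Ideal.mem_span_singleton.1 ((Submodule.Quotient.mk_eq_zero _).1 hr)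
  exact ⟨s, rfl⟩

end Multiplication

/-- An exact pair of elements: the annihilator of each of `a`, `b` is generated by the
other one. -/
structure IsExactPair {R : Type*} [CommRing R] (a b : R) : Prop where
  mul_eq_zero_iff : ∀ r, a * r = 0 ↔ b ∣ r
  mul_eq_zero_iff' : ∀ r, b * r = 0 ↔ a ∣ r

namespace IsExactPair

variable {R : Type u} [CommRing R] {a b : R}

lemma symm (h : IsExactPair a b) : IsExactPair b a :=
  ⟨h.mul_eq_zero_iff', h.mul_eq_zero_iff⟩

lemma mul_eq_zero (h : IsExactPair a b) : a * b = 0 :=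
  (h.mul_eq_zero_iff b).2 dvd_rfl

lemma exact_smulEnd (h : IsExactPair a b) :
    (ShortComplex.mk (smulEnd R R b) (smulEnd R R a)
      (smulEnd_comp_smulEnd_eq_zero R R h.symm.mul_eq_zero)).Exact := by
  rw [ShortComplex.moduleCat_exact_iff]
  intro r hr
  obtain ⟨s, rfl⟩ := (h.mul_eq_zero_iff r).1 hr
  exact ⟨s, rfl⟩

/-- The complex `⋯ → R ─a→ R ─b→ R ─a→ R` of free modules; the differential into
degree `0` is multiplication by `a`. -/
noncomputable abbrev periodicComplex (h : IsExactPair a b) : ChainComplex (ModuleCat R) ℕ :=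
  HomologicalComplex.alternatingConst (ModuleCat.of R R)
    (smulEnd_comp_smulEnd_eq_zero R R h.symm.mul_eq_zero)
    (smulEnd_comp_smulEnd_eq_zero R R h.mul_eq_zero)
    fun _ _ => ComplexShape.down_nat_odd_add

lemma periodicComplex_d_of_even (h : IsExactPair a b) {i : ℕ} (hi : Even i) :
    h.periodicComplex.d (i + 1) i = smulEnd R R a :=
  (dif_pos rfl).trans (if_neg (Nat.even_add_one.not_left.2 hi))

lemma periodicComplex_d_of_odd (h : IsExactPair a b) {i : ℕ} (hi : Odd i) :
    h.periodicComplex.d (i + 1) i = smulEnd R R b :=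
  (dif_pos rfl).trans (if_pos hi.add_one)

/-- The map from the periodic complex to `R ⧸ (a)`, placed in degree `0`, given by the
projection `R → R ⧸ (a)`. -/
noncomputable def augmentation (h : IsExactPair a b) :
    h.periodicComplex ⟶
      (ChainComplex.single₀ (ModuleCat R)).obj (ModuleCat.of R (R ⧸ Ideal.span {a})) :=
  (h.periodicComplex.toSingle₀Equiv _).symm
    ⟨ModuleCat.ofHom (Submodule.mkQ (Ideal.span {a})), by
      rw [h.periodicComplex_d_of_even Even.zero]
      exact smulEnd_comp_mkQ a⟩

instance quasiIso_augmentation (h : IsExactPair a b) : QuasiIso h.augmentation where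
  quasiIsoAt n := by
    cases n with
    | zero =>
      rw [augmentation, ChainComplex.quasiIsoAt₀_iff,
        ShortComplex.quasiIso_iff_of_zeros' _ rfl rfl rfl]
      constructor
      · simpa [ChainComplex.toSingle₀Equiv] using! exact_smulEnd_mkQ a
      · rw [ModuleCat.epi_iff_surjective]
        simpa [ChainComplex.toSingle₀Equiv] using! Submodule.mkQ_surjective (Ideal.span {a})
    | succ m =>
      rw [quasiIsoAt_iff_exactAt' (hL := ChainComplex.exactAt_succ_single_obj ..),
        HomologicalComplex.exactAt_iff' _ (m + 2) (m + 1) m (by simp) (by simp)]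
      rcases Nat.even_or_odd (m + 1) with hm | hm
      · exact ShortComplex.exact_of_iso (HomologicalComplex.alternatingConstScIsoEven
          _ _ _ _ (by simp) (by simp) hm).symm h.symm.exact_smulEnd
      · exact ShortComplex.exact_of_iso (HomologicalComplex.alternatingConstScIsoOdd
          _ _ _ _ (by simp) (by simp) hm).symm h.exact_smulEnd

/-- The `2`-periodic free resolution of `R ⧸ (a)` attached to an exact pair `a`, `b`. -/
noncomputable def resolution (h : IsExactPair a b) :
    ProjectiveResolution (ModuleCat.of R (R ⧸ Ideal.span {a})) where
  complex := h.periodicComplex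
  projective _ := inferInstanceAs (Projective (ModuleCat.of R R))
  π := h.augmentation

end IsExactPair

section Ext

variable (k : Type u) {R : Type u} [Field k] [CommRing R] [Algebra k R]
  (M : Type u) [AddCommGroup M] [Module k M] [Module R M] [IsScalarTower k R M] {a b : R}

/-- The `k`-linear identification `Hom_R(R, M) ≃ M`, evaluation at `1`. -/
noncomputable def linearYonedaSelfEquiv :
    ((linearYoneda k (ModuleCat R)).obj (ModuleCat.of R M)).obj (Opposite.op (ModuleCat.of R R))
      ≃ₗ[k] M where
  toFun (f : ModuleCat.of R R ⟶ ModuleCat.of R M) := f.hom (1 : R)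
  map_add' _ _ := rfl
  map_smul' c f := algebraMap_smul R c
    ((f : ModuleCat.of R R ⟶ ModuleCat.of R M).hom (1 : R) : M)
  invFun (m : M) := ModuleCat.ofHom (LinearMap.toSpanSingleton R M m)
  left_inv (f : ModuleCat.of R R ⟶ ModuleCat.of R M) := by
    apply ModuleCat.hom_ext
    ext
    exact one_smul R _
  right_inv m := one_smul R m

lemma linearYonedaSelfEquiv_naturality (a : R) :
    ((linearYoneda k (ModuleCat R)).obj (ModuleCat.of R M)).map (smulEnd R R a).op ≫
        (linearYonedaSelfEquiv k M).toModuleIso.hom =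
      (linearYonedaSelfEquiv k M).toModuleIso.hom ≫ smulEnd k M a := by
  ext (f : ModuleCat.of R R ⟶ ModuleCat.of R M)
  exact map_smul f.hom a (1 : R)

/-- Applying `Hom_R(-, M)` to the periodic resolution yields
`M ─a→ M ─b→ M ─a→ M → ⋯`. -/
noncomputable def homResolutionIso (h : IsExactPair a b) :
    h.resolution.complex.linearYonedaObj k (ModuleCat.of R M) ≅
      HomologicalComplex.alternatingConst (ModuleCat.of k M)
        (smulEnd_comp_smulEnd_eq_zero k M h.mul_eq_zero)
        (smulEnd_comp_smulEnd_eq_zero k M h.symm.mul_eq_zero)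
        fun _ _ => ComplexShape.up_nat_odd_add :=
  HomologicalComplex.Hom.isoOfComponents (fun _ => (linearYonedaSelfEquiv k M).toModuleIso) <| by
    rintro i _ ⟨rfl⟩
    rcases Nat.even_or_odd i with hi | hi
    · have hd : h.resolution.complex.d (i + 1) i = smulEnd R R a := h.periodicComplex_d_of_even hi
      have hsq := linearYonedaSelfEquiv_naturality k M a
      rw [← hd] at hsq
      simpa [hi] using! hsq.symm
    · have hd : h.resolution.complex.d (i + 1) i = smulEnd R R b := h.periodicComplex_d_of_odd hi
      have hsq := linearYonedaSelfEquiv_naturality k M b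
      rw [← hd] at hsq
      simpa [Nat.not_even_iff_odd.2 hi] using! hsq.symm

/-- In odd degrees, `Ext(R ⧸ (a), M)` is the middle homology of `M ─a→ M ─b→ M`. -/
noncomputable def extIsoHomology (h : IsExactPair a b) {n : ℕ} (hn : Odd n) :
    ((Ext k (ModuleCat R) n).obj (Opposite.op (ModuleCat.of R (R ⧸ Ideal.span {a})))).obj
        (ModuleCat.of R M) ≅
      (ShortComplex.mk (smulEnd k M a) (smulEnd k M b)
        (smulEnd_comp_smulEnd_eq_zero k M h.mul_eq_zero)).homology :=
  h.resolution.isoExt n _ ≪≫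
    HomologicalComplex.homologyMapIso (homResolutionIso k M h) n ≪≫
    HomologicalComplex.alternatingConstHomologyIsoOdd _ _ _ _
      (by obtain ⟨m, rfl⟩ := hn; simp) (by simp) hn

/-- In odd degrees, `Ext(R ⧸ (a), M) ≃ M ⧸ a M` when `b` kills `M`. -/
noncomputable def extEquivQuotSMulTop (h : IsExactPair a b) (hM : ∀ m : M, b • m = 0) {n : ℕ}
    (hn : Odd n) :
    ((Ext k (ModuleCat R) n).obj (Opposite.op (ModuleCat.of R (R ⧸ Ideal.span {a})))).obj
      (ModuleCat.of R M) ≃ₗ[k] QuotSMulTop a M :=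
  let S := ShortComplex.mk (smulEnd k M a) (smulEnd k M b)
    (smulEnd_comp_smulEnd_eq_zero k M h.mul_eq_zero)
  have hg : S.g = 0 := by ext m; exact hM m
  let e : S.homology ≅ ModuleCat.of k (M ⧸ LinearMap.range (Algebra.lsmul k k M a)) :=
    S.asIsoHomologyι hg ≪≫ S.moduleCatOpcyclesIso
  (extIsoHomology k M h hn ≪≫ e).toLinearEquiv ≪≫ₗ
    Submodule.quotEquivOfEq _ _ (range_lsmul k M a) ≪≫ₗ
    Submodule.Quotient.restrictScalarsEquiv k _

end Ext

section Quotient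

variable {A : Type*} [CommRing A]

lemma mk_mk_eq_zero_iff_dvd {I : Ideal A} {q : A} (hI : I ≤ Ideal.span {q}) (x : A) :
    Ideal.Quotient.mk (Ideal.span {Ideal.Quotient.mk I q}) (Ideal.Quotient.mk I x) = 0 ↔
      q ∣ x := by
  rw [Ideal.Quotient.eq_zero_iff_mem, ← Ideal.mem_comap, ← Set.image_singleton, ← Ideal.map_span,
    Ideal.comap_map_mk hI, Ideal.mem_span_singleton]

/-- For `I ⊆ (q)` and `M = (A ⧸ I) ⧸ (q)`, the quotient `M ⧸ p M` is `A ⧸ (p, q)`. -/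
noncomputable def quotSMulTopQuotientEquiv {I : Ideal A} {q : A} (hI : I ≤ Ideal.span {q})
    (p : A) :
    QuotSMulTop (Ideal.Quotient.mk I p) ((A ⧸ I) ⧸ Ideal.span {Ideal.Quotient.mk I q}) ≃ₗ[A]
      A ⧸ Ideal.span {p, q} :=
  let π : A →ₗ[A] QuotSMulTop (Ideal.Quotient.mk I p)
      ((A ⧸ I) ⧸ Ideal.span {Ideal.Quotient.mk I q}) :=
    (Submodule.mkQ _).restrictScalars A ∘ₗ Algebra.linearMap A _
  have hsurj : Function.Surjective π :=
    (Submodule.mkQ_surjective _).comp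
      (Ideal.Quotient.mk_surjective.comp Ideal.Quotient.mk_surjective)
  have hker : LinearMap.ker π = Ideal.span {p, q} := by
    ext x
    calc x ∈ LinearMap.ker π
      _ ↔ ∃ y, Ideal.Quotient.mk I p • y = Ideal.Quotient.mk _ (Ideal.Quotient.mk I x) := by
        refine (Submodule.Quotient.mk_eq_zero _).trans ?_
        simp only [Submodule.mem_smul_pointwise_iff_exists, Submodule.mem_top, true_and]
        rfl
      _ ↔ ∃ y, q ∣ x - y * p := by
        rw [(Ideal.Quotient.mk_surjective.comp Ideal.Quotient.mk_surjective).exists]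
        refine exists_congr fun y => ?_
        rw [← mk_mk_eq_zero_iff_dvd hI, map_sub, map_sub, sub_eq_zero, eq_comm, mul_comm y,
          map_mul, map_mul]
        rfl
      _ ↔ x ∈ Ideal.span {p, q} := by
        simp only [Ideal.mem_span_pair, dvd_def, sub_eq_iff_eq_add', mul_comm q, eq_comm (a := x)]
  (Submodule.quotEquivOfEq _ _ hker.symm ≪≫ₗ π.quotKerEquivOfSurjective hsurj).symm

lemma mk_mul_eq_zero_iff {p q : A} (hp : IsLeftRegular p) (r : A ⧸ Ideal.span {p * q}) :
    Ideal.Quotient.mk _ p * r = 0 ↔ Ideal.Quotient.mk _ q ∣ r := by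
  obtain ⟨s, rfl⟩ := Ideal.Quotient.mk_surjective r
  rw [← map_mul, Ideal.Quotient.eq_zero_iff_dvd]
  constructor
  · rintro ⟨t, ht⟩
    exact map_dvd _ ⟨t, hp (by simpa only [mul_assoc] using ht)⟩
  · rintro ⟨t, ht⟩
    obtain ⟨t, rfl⟩ := Ideal.Quotient.mk_surjective t
    rw [← map_mul, Ideal.Quotient.mk_eq_mk_iff_sub_mem, Ideal.mem_span_singleton] at ht
    rw [← sub_add_cancel s (q * t), mul_add, ← mul_assoc]
    exact (ht.mul_left p).add (dvd_mul_right _ _)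

lemma isExactPair_mk {p q : A} (hp : IsLeftRegular p) (hq : IsLeftRegular q) :
    IsExactPair (Ideal.Quotient.mk (Ideal.span {p * q}) p)
      (Ideal.Quotient.mk (Ideal.span {p * q}) q) where
  mul_eq_zero_iff := mk_mul_eq_zero_iff hp
  mul_eq_zero_iff' := by
    rw [mul_comm p q]
    exact mk_mul_eq_zero_iff hq

end Quotient

/-- In odd degrees, `Ext` over `A ⧸ (p * q)` of the quotients by `p` and by `q` is
`A ⧸ (p, q)`. -/
noncomputable def extQuotientEquiv (k : Type u) {A : Type u} [Field k] [CommRing A] [Algebra k A]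
    {p q : A} (hp : IsLeftRegular p) (hq : IsLeftRegular q) {n : ℕ} (hn : Odd n) :
    letI R := A ⧸ Ideal.span {p * q}
    ((Ext k (ModuleCat R) n).obj
        (Opposite.op (ModuleCat.of R (R ⧸ Ideal.span {Ideal.Quotient.mk _ p})))).obj
      (ModuleCat.of R (R ⧸ Ideal.span {Ideal.Quotient.mk _ q})) ≃ₗ[k] A ⧸ Ideal.span {p, q} :=
  have hle : Ideal.span {p * q} ≤ Ideal.span {q} :=
    Ideal.span_singleton_le_span_singleton.2 (dvd_mul_left q p)
  have hM := Module.mem_annihilator.1 <| Ideal.annihilator_quotient.ge <|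
    Ideal.mem_span_singleton_self (Ideal.Quotient.mk (Ideal.span {p * q}) q)
  extEquivQuotSMulTop k _ (isExactPair_mk hp hq) hM hn ≪≫ₗ
    (quotSMulTopQuotientEquiv hle p).restrictScalars k

section Rank

variable (k : Type*) {A : Type*} [Field k] [CommRing A] [Algebra k A]

-- Multiplication by `f` makes `0 → A ⧸ (g, h) → A ⧸ (f * g, h) → A ⧸ (f, h) → 0` exact.
lemma rank_quotient_span_mul_pair {f h : A} (hf : ∀ x, h ∣ f * x → h ∣ x) (g : A) :
    Module.rank k (A ⧸ Ideal.span {f * g, h}) =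
      Module.rank k (A ⧸ Ideal.span {f, h}) + Module.rank k (A ⧸ Ideal.span {g, h}) := by
  have hle : Ideal.span {f * g, h} ≤ Ideal.span {f, h} :=
    Ideal.span_le.2 <| Set.pair_subset (Ideal.mul_mem_right _ _ (Ideal.subset_span (by simp)))
      (Ideal.subset_span (by simp))
  have hmul : Ideal.span {g, h} ≤
      Submodule.comap (LinearMap.mulLeft A f) (Ideal.span {f * g, h}) :=
    Ideal.span_le.2 <| Set.pair_subset (Ideal.subset_span (by simp))
      (Ideal.mul_mem_left _ _ (Ideal.subset_span (by simp)))
  let π : (A ⧸ Ideal.span {f * g, h}) →ₗ[k] A ⧸ Ideal.span {f, h} :=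
    (Ideal.Quotient.factorₐ k hle).toLinearMap
  let ι : (A ⧸ Ideal.span {g, h}) →ₗ[k] A ⧸ Ideal.span {f * g, h} :=
    (Submodule.mapQ _ _ (LinearMap.mulLeft A f) hmul).restrictScalars k
  have hι : Function.Injective ι := by
    rw [injective_iff_map_eq_zero]
    rintro ⟨x⟩ hx
    obtain ⟨u, v, huv : _ = f * x⟩ :=
      Ideal.mem_span_pair.1 ((Submodule.Quotient.mk_eq_zero _).1 hx)
    obtain ⟨w, hw⟩ := hf (x - u * g) ⟨v, by linear_combination -huv⟩
    exact (Submodule.Quotient.mk_eq_zero _).2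
      (Ideal.mem_span_pair.2 ⟨u, w, by linear_combination -hw⟩)
  have hπ : Function.Surjective π := Ideal.Quotient.factor_surjective hle
  have hexact : LinearMap.ker π = LinearMap.range ι := by
    refine le_antisymm ?_ ?_
    · rintro ⟨x⟩ hx
      obtain ⟨u, v, rfl⟩ := Ideal.mem_span_pair.1 ((Submodule.Quotient.mk_eq_zero _).1 hx)
      refine ⟨Ideal.Quotient.mk _ u, Ideal.Quotient.eq.2 (Ideal.mem_span_pair.2 ⟨0, -v, ?_⟩)⟩
      simp only [LinearMap.mulLeft_apply]
      ring
    · rintro _ ⟨⟨x⟩, rfl⟩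
      exact (Submodule.Quotient.mk_eq_zero _).2
        (Ideal.mul_mem_right _ _ (Ideal.subset_span (by simp)))
  rw [LinearMap.rank_eq_of_surjective hπ, hexact, rank_range_of_injective _ hι]

variable [DecompositionMonoid A] {ι κ : Type*}

lemma rank_quotient_span_prod_pair (s : Finset ι) (f : ι → A) (h : A)
    (hf : ∀ i ∈ s, IsRelPrime (f i) h) :
    Module.rank k (A ⧸ Ideal.span {∏ i ∈ s, f i, h}) =
      ∑ i ∈ s, Module.rank k (A ⧸ Ideal.span {f i, h}) := by
  classical
  induction s using Finset.induction_on with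
  | empty =>
    have : Ideal.span {1, h} = ⊤ := (Ideal.eq_top_iff_one _).2 (Ideal.subset_span (by simp))
    have : Subsingleton (A ⧸ Ideal.span {1, h}) := Ideal.Quotient.subsingleton_iff.2 this
    rw [Finset.prod_empty, Finset.sum_empty]
    exact rank_subsingleton' k _
  | insert i s hi ih =>
    rw [Finset.forall_mem_insert] at hf
    rw [Finset.prod_insert hi, Finset.sum_insert hi,
      rank_quotient_span_mul_pair k fun _ => hf.1.symm.dvd_of_dvd_mul_left, ih hf.2]

lemma rank_quotient_span_prod_prod (s : Finset ι) (t : Finset κ) (f : ι → A) (g : κ → A)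
    (h : ∀ i ∈ s, ∀ j ∈ t, IsRelPrime (f i) (g j)) :
    Module.rank k (A ⧸ Ideal.span {∏ i ∈ s, f i, ∏ j ∈ t, g j}) =
      ∑ i ∈ s, ∑ j ∈ t, Module.rank k (A ⧸ Ideal.span {f i, g j}) := by
  rw [rank_quotient_span_prod_pair k s f _ fun i hi => IsRelPrime.prod_right (h i hi)]
  refine Finset.sum_congr rfl fun i hi => ?_
  rw [Set.pair_comm, rank_quotient_span_prod_pair k t g _ fun j hj => (h i hi j hj).symm]
  exact Finset.sum_congr rfl fun j _ => by rw [Set.pair_comm]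

end Rank

section LinearForms

open MvPolynomial

lemma ker_aeval_zero (σ k : Type*) [CommRing k] :
    RingHom.ker (aeval (0 : σ → k)) = idealOfVars σ k := by
  ext p
  rw [RingHom.mem_ker, MvPolynomial.aeval_zero, ← pow_one (idealOfVars σ k),
    mem_pow_idealOfVars_iff']
  simp [constantCoeff_eq, Finsupp.degree_eq_zero_iff]

lemma rank_quotient_idealOfVars (σ k : Type*) [CommRing k] [Nontrivial k] :
    Module.rank k (MvPolynomial σ k ⧸ idealOfVars σ k) = 1 := by
  have hsurj : Function.Surjective (aeval (R := k) (0 : σ → k)) := fun c => ⟨C c, by simp⟩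
  rw [← ker_aeval_zero]
  simpa using (Ideal.quotientKerAlgEquivOfSurjective hsurj).toLinearEquiv.lift_rank_eq

/-- The linear form `a X + b Y` in the variables `X = X 0` and `Y = X 1`. -/
noncomputable def linearForm {k : Type*} [CommRing k] (a b : k) : MvPolynomial (Fin 2) k :=
  C a * X 0 + C b * X 1

variable {k : Type*} [CommRing k] {a b c d : k}

lemma eq_zero_of_linearForm_eq_zero (h : linearForm a b = 0) : a = 0 ∧ b = 0 :=
  ⟨by simpa [linearForm] using congr(eval ![1, 0] $h),
    by simpa [linearForm] using congr(eval ![0, 1] $h)⟩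

lemma linearForm_ne_zero_left (h : a * d - b * c ≠ 0) : linearForm a b ≠ 0 := by
  intro h0
  obtain ⟨rfl, rfl⟩ := eq_zero_of_linearForm_eq_zero h0
  simp at h

lemma linearForm_ne_zero_right (h : a * d - b * c ≠ 0) : linearForm c d ≠ 0 := by
  intro h0
  obtain ⟨rfl, rfl⟩ := eq_zero_of_linearForm_eq_zero h0
  simp at h

lemma span_linearForm_pair (h : IsUnit (a * d - b * c)) :
    Ideal.span {linearForm a b, linearForm c d} = idealOfVars (Fin 2) k := by
  obtain ⟨u, hu⟩ := h.exists_left_inv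
  have hdet : C u * (C a * C d - C b * C c) = (1 : MvPolynomial (Fin 2) k) := by
    simp only [← map_mul, ← map_sub, hu, map_one]
  apply le_antisymm
  · refine Ideal.span_le.2 (Set.pair_subset ?_ ?_) <;>
      exact add_mem (Ideal.mul_mem_left _ _ (Ideal.subset_span ⟨0, rfl⟩))
        (Ideal.mul_mem_left _ _ (Ideal.subset_span ⟨1, rfl⟩))
  · rw [Ideal.span_le, Set.range_subset_iff, Fin.forall_fin_two]
    constructor
    · exact Ideal.mem_span_pair.2 ⟨C u * C d, -C u * C b, by
        unfold linearForm; linear_combination X 0 * hdet⟩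
    · exact Ideal.mem_span_pair.2 ⟨-C u * C c, C u * C a, by
        unfold linearForm; linear_combination X 1 * hdet⟩

lemma isRelPrime_X_X {σ : Type*} [IsDomain k] {i j : σ} (hij : i ≠ j) :
    IsRelPrime (X i : MvPolynomial σ k) (X j) := by
  rwa [X_prime.irreducible.isRelPrime_iff_not_dvd, X_dvd_X]

lemma isRelPrime_linearForm [IsDomain k] (h : IsUnit (a * d - b * c)) :
    IsRelPrime (linearForm a b) (linearForm c d) := by
  intro p hp hq
  have hle : idealOfVars (Fin 2) k ≤ Ideal.span {p} := by
    rw [← span_linearForm_pair h, Ideal.span_le]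
    exact Set.pair_subset (Ideal.mem_span_singleton.2 hp) (Ideal.mem_span_singleton.2 hq)
  have hX (i : Fin 2) : p ∣ X i := Ideal.mem_span_singleton.1 (hle (Ideal.subset_span ⟨i, rfl⟩))
  exact isRelPrime_X_X (by decide) (hX 0) (hX 1)

end LinearForms

theorem stmt_7_general {k : Type u} [Field k] {ι κ : Type*} [Fintype ι] [Fintype κ]
    [Nonempty ι] [Nonempty κ] (a b : ι → k) (c d : κ → k)
    (h : ∀ i j, a i * d j - b i * c j ≠ 0) {n : ℕ} (hn : Odd n)
    (F p q : MvPolynomial (Fin 2) k) (hp : p = ∏ i, linearForm (a i) (b i))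
    (hq : q = ∏ j, linearForm (c j) (d j)) (hF : F = p * q) :
    letI R := MvPolynomial (Fin 2) k ⧸ Ideal.span {F}
    Module.finrank k
      (((Ext k (ModuleCat R) n).obj
          (Opposite.op (ModuleCat.of R (R ⧸ Ideal.span {Ideal.Quotient.mk _ p})))).obj
        (ModuleCat.of R (R ⧸ Ideal.span {Ideal.Quotient.mk _ q}))) =
      Fintype.card ι * Fintype.card κ := by
  subst hF
  have hp0 : p ≠ 0 := hp ▸ Finset.prod_ne_zero_iff.2 fun i _ =>
    linearForm_ne_zero_left (h i (Classical.arbitrary κ))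
  have hq0 : q ≠ 0 := hq ▸ Finset.prod_ne_zero_iff.2 fun j _ =>
    linearForm_ne_zero_right (h (Classical.arbitrary ι) j)
  rw [(extQuotientEquiv k (mul_right_injective₀ hp0) (mul_right_injective₀ hq0) hn).finrank_eq]
  apply Module.finrank_eq_of_rank_eq
  calc Module.rank k (MvPolynomial (Fin 2) k ⧸ Ideal.span {p, q})
    _ = ∑ i, ∑ j, Module.rank k (MvPolynomial (Fin 2) k ⧸
          Ideal.span {linearForm (a i) (b i), linearForm (c j) (d j)}) := by
      rw [hp, hq]
      exact rank_quotient_span_prod_prod k _ _ _ _ fun i _ j _ =>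
        isRelPrime_linearForm (h i j).isUnit
    _ = ∑ _ : ι, ∑ _ : κ, 1 := by
      refine Finset.sum_congr rfl fun i _ => Finset.sum_congr rfl fun j _ => ?_
      rw [span_linearForm_pair (h i j).isUnit, rank_quotient_idealOfVars]
    _ = ((Fintype.card ι * Fintype.card κ : ℕ) : Cardinal) := by simp

/-- Let `R = k[X,Y]/(F)`, `R₁₂ = R/z₁z₂R` and `R₃₄ = R/z₃z₄R` (with `z₁z₂ = XY`
and `z₃z₄ = (X−Y)(X−λY)`).  Then `Ext¹_R(R₁₂, R₃₄)` is a 4-dimensional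
`k`-vector space. -/
theorem stmt_7 {k : Type} [Field k] (lam : k) (h0 : lam ≠ 0) (h1 : lam ≠ 1)
    (F : MvPolynomial (Fin 2) k)
    (hF : F = MvPolynomial.X 0 * MvPolynomial.X 1 *
      (MvPolynomial.X 0 - MvPolynomial.X 1) *
      (MvPolynomial.X 0 - MvPolynomial.C lam * MvPolynomial.X 1)) :
    letI R := MvPolynomial (Fin 2) k ⧸ Ideal.span {F}
    letI z12 : R := Ideal.Quotient.mk _ (MvPolynomial.X 0 * MvPolynomial.X 1)
    letI z34 : R := Ideal.Quotient.mk _ ((MvPolynomial.X 0 - MvPolynomial.X 1) *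
      (MvPolynomial.X 0 - MvPolynomial.C lam * MvPolynomial.X 1))
    Module.finrank k
      (((Ext k (ModuleCat R) 1).obj
          (Opposite.op (ModuleCat.of R (R ⧸ Ideal.span {z12})))).obj
        (ModuleCat.of R (R ⧸ Ideal.span {z34}))) = 4 := by
  refine stmt_7_general ![1, 0] ![0, 1] ![1, 1] ![-1, -lam] ?_ odd_one F _ _ ?_ ?_
    (hF.trans (mul_assoc _ _ _))
  · simp [Fin.forall_fin_two, h0]
  · simp [linearForm]
  · simp [linearForm, sub_eq_add_neg]
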